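/- arXiv:1305.3685 — 3 statements merged into one kernel-verified Lean document; each statement's English description precedes it below -/
import Mathlib

section
/- Let N ≥ 3 be an integer, m0 > 0, and F : ℝ → ℝ. Suppose E ∈ ℝ is a lower bound for L_{m0} on the Pohozaev sphere, i.e. L_{m0}(v) ≥ E for every admissible v with ∫_{ℝ^N}|∇v|² dx > 0 and N∫_{ℝ^N}(F(v) − (m0/2)v²) dx = ((N−2)/2)∫_{ℝ^N}|∇v|² dx. Then every admissible u with ∫_{ℝ^N}|∇u|² dx > 0 and P₀(u) ∈ (0, √(N/(N−2))) satisfies L_{m0}(u) ≥ g(P₀(u))·E. (Lemma 2.1 of the paper, with E playing the role of the least energy level E(m0) via its variational characterization.) -/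
open MeasureTheory Real

noncomputable section

/-- `u : ℝ^N → ℝ` is admissible: differentiable with `|∇u|²`, `u²` and `F(u)` integrable. -/
def Admissible {N : ℕ} (F : ℝ → ℝ) (u : EuclideanSpace ℝ (Fin N) → ℝ) : Prop :=
  Differentiable ℝ u ∧
  Integrable (fun x => ‖gradient u x‖ ^ 2) ∧
  Integrable (fun x => (u x) ^ 2) ∧
  Integrable (fun x => F (u x))

/-- The limit functional `L_{m0}`. -/
def Lfun {N : ℕ} (m0 : ℝ) (F : ℝ → ℝ) (u : EuclideanSpace ℝ (Fin N) → ℝ) : ℝ :=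
  (1 / 2) * (∫ x, ‖gradient u x‖ ^ 2) + (m0 / 2) * (∫ x, (u x) ^ 2) -
    ∫ x, F (u x)

/-- The Pohozaev-type function `P₀`. -/
def P0 (N : ℕ) (m0 : ℝ) (F : ℝ → ℝ) (u : EuclideanSpace ℝ (Fin N) → ℝ) : ℝ :=
  Real.sqrt (((N : ℝ) * ∫ x, (F (u x) - (m0 / 2) * (u x) ^ 2)) /
    ((((N : ℝ) - 2) / 2) * ∫ x, ‖gradient u x‖ ^ 2))

/-- The comparison function `g(t) = (1/2)(N t^{N-2} - (N-2) t^N)`. -/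
def gfun (N : ℕ) (t : ℝ) : ℝ :=
  (1 / 2) * ((N : ℝ) * t ^ (N - 2) - ((N : ℝ) - 2) * t ^ N)

/-!
For `t = P₀(u)` the dilation `v = u(t ·)` lies on the Pohozaev sphere: dilating by `t` multiplies
`∫|∇u|²` by `t^{2-N}` and `∫(F(u) - (m0/2)u²)` by `t^{-N}`, so it divides the ratio of the two sides
of the Pohozaev identity, which is `P₀(u)²`, by `t²`. On the sphere `L_{m0}(v) = (1/N)∫|∇v|²`, and
expressing `L_{m0}(u)` through `∫|∇v|²` gives the exact identity `L_{m0}(u) = g(t) L_{m0}(v)`.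
The claim follows because `g ≥ 0` on `[0, √(N/(N-2))]`.
-/

section Dilation

open ComplexConjugate

theorem gradient_comp_smul {𝕜 V : Type*} [RCLike 𝕜] [NormedAddCommGroup V]
    [InnerProductSpace 𝕜 V] [CompleteSpace V] (u : V → 𝕜) (c : 𝕜) (x : V) :
    gradient (fun y => u (c • y)) x = conj c • gradient u (c • x) := by
  simp only [gradient, fderiv_comp_smul, map_smulₛₗ]

variable {V : Type*} [NormedAddCommGroup V] [InnerProductSpace ℝ V]

theorem norm_gradient_comp_smul_sq [CompleteSpace V] (u : V → ℝ) (c : ℝ) (x : V) :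
    ‖gradient (fun y => u (c • y)) x‖ ^ 2 = c ^ 2 * ‖gradient u (c • x)‖ ^ 2 := by
  rw [gradient_comp_smul, conj_trivial, norm_smul, mul_pow, norm_eq_abs, sq_abs]

theorem integral_norm_gradient_comp_smul_sq [FiniteDimensional ℝ V] [MeasurableSpace V]
    [BorelSpace V] (μ : Measure V) [μ.IsAddHaarMeasure] (u : V → ℝ) (c : ℝ) :
    ∫ x, ‖gradient (fun y => u (c • y)) x‖ ^ 2 ∂μ =
      c ^ 2 * (|(c ^ Module.finrank ℝ V)⁻¹| * ∫ x, ‖gradient u x‖ ^ 2 ∂μ) := by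
  simp only [norm_gradient_comp_smul_sq, integral_const_mul]
  rw [Measure.integral_comp_smul μ (fun x => ‖gradient u x‖ ^ 2), smul_eq_mul]

end Dilation

section Comparison

variable {N : ℕ} {t : ℝ}

theorem gfun_eq_pow_mul (hN : 2 ≤ N) (t : ℝ) :
    gfun N t = t ^ (N - 2) * ((N - (N - 2) * t ^ 2) / 2) := by
  rw [gfun, ← pow_sub_mul_pow t hN]
  ring

theorem gfun_nonneg (hN : 2 ≤ N) (ht : 0 ≤ t) (ht' : t ≤ √((N : ℝ) / (N - 2))) :
    0 ≤ gfun N t := by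
  have hN' : (0 : ℝ) ≤ N - 2 := sub_nonneg.2 (by exact_mod_cast hN)
  have ht_sq : t ^ 2 ≤ (N : ℝ) / (N - 2) :=
    (le_sqrt ht (div_nonneg N.cast_nonneg hN')).1 ht'
  have hbracket : t ^ 2 * (N - 2) ≤ N := mul_le_of_le_div₀ N.cast_nonneg hN' ht_sq
  rw [gfun_eq_pow_mul hN]
  exact mul_nonneg (pow_nonneg ht _) (by linarith)

end Comparison

section Pohozaev

variable {N : ℕ} {m0 : ℝ} {F : ℝ → ℝ} {u : EuclideanSpace ℝ (Fin N) → ℝ}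

/-- The Pohozaev sphere: admissible functions with nonzero gradient satisfying the Pohozaev
identity, on which the energy level is characterized. The identity is written without division,
as the equality of the numerator and the denominator under the square root in `P0`. -/
def pohozaevSphere (N : ℕ) (m0 : ℝ) (F : ℝ → ℝ) : Set (EuclideanSpace ℝ (Fin N) → ℝ) :=
  {v | Admissible F v ∧ 0 < ∫ x, ‖gradient v x‖ ^ 2 ∧
    (N : ℝ) * (∫ x, (F (v x) - (m0 / 2) * (v x) ^ 2)) =
      (((N : ℝ) - 2) / 2) * ∫ x, ‖gradient v x‖ ^ 2}

theorem Admissible.comp_smul (hu : Admissible F u) {c : ℝ} (hc : c ≠ 0) :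
    Admissible F (fun x => u (c • x)) := by
  obtain ⟨hdiff, hgrad, hsq, hF⟩ := hu
  refine ⟨hdiff.comp (differentiable_id.const_smul c), ?_, hsq.comp_smul hc, hF.comp_smul hc⟩
  simp only [norm_gradient_comp_smul_sq]
  exact (hgrad.comp_smul hc).const_mul _

theorem Admissible.Lfun_eq (hu : Admissible F u) (m0 : ℝ) :
    Lfun m0 F u =
      (1 / 2) * (∫ x, ‖gradient u x‖ ^ 2) - ∫ x, (F (u x) - (m0 / 2) * (u x) ^ 2) := by
  obtain ⟨-, -, hsq, hF⟩ := hu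
  rw [Lfun, integral_sub hF (hsq.const_mul _), integral_const_mul]
  ring

theorem Lfun_of_mem_pohozaevSphere (hN : N ≠ 0) (hu : u ∈ pohozaevSphere N m0 F) :
    Lfun m0 F u = (∫ x, ‖gradient u x‖ ^ 2) / N := by
  obtain ⟨hadm, -, hpohozaev⟩ := hu
  rw [hadm.Lfun_eq, eq_div_iff (Nat.cast_ne_zero.2 hN)]
  linear_combination -hpohozaev

theorem pohozaev_identity_of_P0_pos (hP : 0 < P0 N m0 F u) :
    (N : ℝ) * (∫ x, (F (u x) - (m0 / 2) * (u x) ^ 2)) =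
      P0 N m0 F u ^ 2 * ((((N : ℝ) - 2) / 2) * ∫ x, ‖gradient u x‖ ^ 2) := by
  have hratio := sqrt_pos.1 hP
  rw [P0, sq_sqrt hratio.le]
  -- A vanishing denominator would make the ratio, hence `P0`, equal to `0`.
  exact (div_mul_cancel₀ _ (div_ne_zero_iff.1 hratio.ne').2).symm

theorem integral_norm_gradient_dilation_sq (hN : 2 ≤ N) {t : ℝ} (ht : 0 < t)
    (u : EuclideanSpace ℝ (Fin N) → ℝ) :
    ∫ x, ‖gradient (fun y => u (t • y)) x‖ ^ 2 =
      (t ^ (N - 2))⁻¹ * ∫ x, ‖gradient u x‖ ^ 2 := by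
  rw [integral_norm_gradient_comp_smul_sq, finrank_euclideanSpace_fin, abs_of_pos (by positivity),
    ← pow_sub_mul_pow t hN]
  field_simp

theorem dilation_P0_mem_pohozaevSphere (hN : 2 ≤ N) (hu : Admissible F u)
    (hgrad : 0 < ∫ x, ‖gradient u x‖ ^ 2) (hP : 0 < P0 N m0 F u) :
    (fun x => u (P0 N m0 F u • x)) ∈ pohozaevSphere N m0 F := by
  have hpohozaev := pohozaev_identity_of_P0_pos hP
  set t := P0 N m0 F u
  have hpotential : ∫ x, (F (u (t • x)) - (m0 / 2) * (u (t • x)) ^ 2) =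
      (t ^ N)⁻¹ * ∫ x, (F (u x) - (m0 / 2) * (u x) ^ 2) := by
    rw [Measure.integral_comp_smul_of_nonneg volume (fun x => F (u x) - (m0 / 2) * (u x) ^ 2) t
      (hR := hP.le), finrank_euclideanSpace_fin, smul_eq_mul]
  refine ⟨hu.comp_smul hP.ne', ?_, ?_⟩
  · rw [integral_norm_gradient_dilation_sq hN hP]
    positivity
  · rw [hpotential, mul_left_comm, hpohozaev, integral_norm_gradient_dilation_sq hN hP,
      ← pow_sub_mul_pow t hN]
    field_simp

theorem Lfun_eq_gfun_P0_mul_Lfun_dilation (hN : 2 ≤ N) (hu : Admissible F u)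
    (hgrad : 0 < ∫ x, ‖gradient u x‖ ^ 2) (hP : 0 < P0 N m0 F u) :
    Lfun m0 F u = gfun N (P0 N m0 F u) * Lfun m0 F (fun x => u (P0 N m0 F u • x)) := by
  have hN' : (N : ℝ) ≠ 0 := by positivity
  rw [Lfun_of_mem_pohozaevSphere (by positivity) (dilation_P0_mem_pohozaevSphere hN hu hgrad hP),
    integral_norm_gradient_dilation_sq hN hP, gfun_eq_pow_mul hN, hu.Lfun_eq]
  have hpohozaev := pohozaev_identity_of_P0_pos hP
  generalize ∫ x, (F (u x) - (m0 / 2) * (u x) ^ 2) = potential at hpohozaev ⊢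
  field_simp
  linear_combination -2 * hpohozaev

theorem lower_bound_via_P0_general (hN : 3 ≤ N) {E : ℝ}
    (hE : ∀ v ∈ pohozaevSphere N m0 F, E ≤ Lfun m0 F v) (hu : Admissible F u)
    (hgrad : 0 < ∫ x, ‖gradient u x‖ ^ 2) (hP : 0 < P0 N m0 F u)
    (hP' : P0 N m0 F u ≤ √((N : ℝ) / (N - 2))) :
    gfun N (P0 N m0 F u) * E ≤ Lfun m0 F u := by
  have hN2 : 2 ≤ N := by lia
  rw [Lfun_eq_gfun_P0_mul_Lfun_dilation hN2 hu hgrad hP]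
  gcongr
  · exact gfun_nonneg hN2 hP.le hP'
  · exact hE _ (dilation_P0_mem_pohozaevSphere hN2 hu hgrad hP)

end Pohozaev

/-- Lemma 2.1: if `E` is a lower bound for `L_{m0}` on the Pohozaev sphere `P₀ = 1`, then
`L_{m0}(u) ≥ g(P₀(u))·E` whenever `P₀(u) ∈ (0, √(N/(N-2)))`. -/
theorem lower_bound_via_P0 (N : ℕ) (hN : 3 ≤ N) (m0 : ℝ) (hm0 : 0 < m0) (F : ℝ → ℝ) (E : ℝ)
    (hE : ∀ v : EuclideanSpace ℝ (Fin N) → ℝ, Admissible F v →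
      0 < ∫ x, ‖gradient v x‖ ^ 2 →
      (N : ℝ) * (∫ x, (F (v x) - (m0 / 2) * (v x) ^ 2)) =
        (((N : ℝ) - 2) / 2) * ∫ x, ‖gradient v x‖ ^ 2 →
      E ≤ Lfun m0 F v) :
    ∀ u : EuclideanSpace ℝ (Fin N) → ℝ, Admissible F u →
      0 < ∫ x, ‖gradient u x‖ ^ 2 →
      P0 N m0 F u ∈ Set.Ioo 0 (Real.sqrt ((N : ℝ) / ((N : ℝ) - 2))) →
      gfun N (P0 N m0 F u) * E ≤ Lfun m0 F u := by
  intro u hu hgrad hP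
  exact lower_bound_via_P0_general hN (fun v hv => hE v hv.1 hv.2.1 hv.2.2) hu hgrad hP.1 hP.2.le
end
end

section
/- Let N ≥ 3 be an integer. Let Ŝ be a set of differentiable functions U : ℝ^N → ℝ with U² and |∇U|² integrable, and suppose: (i) there exist C, c > 0 such that |U(x)| + |∇U(x)| ≤ C·exp(−c|x|) for every U ∈ Ŝ and every x ∈ ℝ^N; (ii) there is r_* > 0 with ‖U‖_{H¹} ≥ r_* for every U ∈ Ŝ. For r > 0 let S(r) be the set of functions of the form x ↦ U(x−y) + φ(x) with y ∈ ℝ^N, U ∈ Ŝ, and φ differentiable with φ², |∇φ|² integrable and ‖φ‖_{H¹} < r. Then there exist r₀ > 0, R₀ > 0 and a map Υ : S(r₀) → ℝ^N such that: (a) for every representation u = U(·−p) + φ with p ∈ ℝ^N, U ∈ Ŝ and ‖φ‖_{H¹} ≤ r₀ one has |Υ(u) − p| ≤ 2R₀; (b) Υ is shift equivariant: for every u ∈ S(r₀) and y ∈ ℝ^N the shifted function x ↦ u(x−y) lies in S(r₀) and Υ(u(·−y)) = Υ(u) + y; (c) Υ is locally Lipschitz: there exist constants C₁, C₂ > 0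 such that |Υ(u) − Υ(v)| ≤ C₁‖u−v‖_{H¹} for all u, v ∈ S(r₀) with ‖u−v‖_{H¹} ≤ C₂. (Lemma 2.2 of the paper: the center of mass on a neighborhood of the set of expected solutions.) -/
open MeasureTheory Real

noncomputable section

/-- A function `ℝ^N → ℝ` with the regularity/integrability needed to speak of its H¹-norm. -/
def GoodFun {N : ℕ} (w : EuclideanSpace ℝ (Fin N) → ℝ) : Prop :=
  Differentiable ℝ w ∧
  Integrable (fun x => ‖gradient w x‖ ^ 2) ∧
  Integrable (fun x => (w x) ^ 2)

/-- The H¹-norm `‖w‖_{H¹} = (∫ (|∇w|² + w²))^{1/2}`. -/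
def H1Norm {N : ℕ} (w : EuclideanSpace ℝ (Fin N) → ℝ) : ℝ :=
  Real.sqrt (∫ x, (‖gradient w x‖ ^ 2 + (w x) ^ 2))

/-- The neighborhood `S(r)` of the set `Ŝ` of expected profiles. -/
def SS {N : ℕ} (Shat : Set (EuclideanSpace ℝ (Fin N) → ℝ)) (r : ℝ) :
    Set (EuclideanSpace ℝ (Fin N) → ℝ) :=
  { u | ∃ (y : EuclideanSpace ℝ (Fin N)) (U φ : EuclideanSpace ℝ (Fin N) → ℝ),
      U ∈ Shat ∧ GoodFun φ ∧ H1Norm φ < r ∧ u = fun x => U (x - y) + φ x }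

/-!
To `u = U(· - p) + φ` attach the mass density `q ↦ max (‖u‖_{H¹(B(q, R + 1))} - 2κ, 0)`, where
`4κ = r_*`, and let `Υ u` be its barycenter. The profiles `U` are uniformly small in `H¹` outside
`B(0, R)` while `‖U‖_{H¹} ≥ 4κ`, so for small `φ` the density vanishes outside a ball of fixed
radius around `p` but is at least `κ` on `B(p, 1)`. Hence the barycenter is close to `p`. It
commutes with translations because the density does, and it is Lipschitz because the density is
1-Lipschitz in `u` for the `H¹`-norm while supports and total masses are controlled uniformly.
-/

open Metric Filter Set Function
open scoped ENNReal Topology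

section LpNorm

variable {α F : Type*} [MeasurableSpace α] [NormedAddCommGroup F] {p : ℝ≥0∞} {μ ν : Measure α}
  {f : α → F}

lemma lpNorm_mono_measure (hf : MemLp f p ν) (hμν : μ ≤ ν) : lpNorm f p μ ≤ lpNorm f p ν := by
  rw [← toReal_eLpNorm (hf.1.mono_measure hμν), ← toReal_eLpNorm hf.1]
  exact ENNReal.toReal_mono hf.2.ne (eLpNorm_mono_measure f hμν)

lemma lpNorm_restrict_mono (hf : MemLp f p μ) {s t : Set α} (hst : s ⊆ t) :
    lpNorm f p (μ.restrict s) ≤ lpNorm f p (μ.restrict t) :=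
  lpNorm_mono_measure (hf.restrict t) (Measure.restrict_mono_set μ hst)

lemma lpNorm_indicator_eq_lpNorm_restrict (hf : MemLp f p μ) {s : Set α} (hs : MeasurableSet s) :
    lpNorm (s.indicator f) p μ = lpNorm f p (μ.restrict s) := by
  rw [← toReal_eLpNorm (hf.1.indicator hs), ← toReal_eLpNorm hf.1.restrict,
    eLpNorm_indicator_eq_eLpNorm_restrict hs]

lemma lpNorm_le_lpNorm_restrict_add_lpNorm_restrict_compl (hf : MemLp f p μ) (hp : 1 ≤ p)
    {s : Set α} (hs : MeasurableSet s) :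
    lpNorm f p μ ≤ lpNorm f p (μ.restrict s) + lpNorm f p (μ.restrict sᶜ) := by
  rw [← lpNorm_indicator_eq_lpNorm_restrict hf hs,
    ← lpNorm_indicator_eq_lpNorm_restrict hf hs.compl]
  simpa only [indicator_self_add_compl] using
    lpNorm_add_le (hf.indicator hs) (g := sᶜ.indicator f) hp

lemma lpNorm_comp_measurePreserving {β : Type*} [MeasurableSpace β] {ν : Measure β} {g : β → F}
    {T : α → β} (hg : AEStronglyMeasurable g ν) (hT : MeasurePreserving T μ ν) :
    lpNorm (g ∘ T) p μ = lpNorm g p ν := by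
  rw [← toReal_eLpNorm (hg.comp_measurePreserving hT), ← toReal_eLpNorm hg,
    eLpNorm_comp_measurePreserving hg hT]

lemma lpNorm_two_eq_sqrt_integral (hf : AEStronglyMeasurable f μ) :
    lpNorm f 2 μ = √(∫ x, ‖f x‖ ^ 2 ∂μ) := by
  rw [lpNorm_eq_integral_norm_rpow_toReal two_ne_zero ENNReal.ofNat_ne_top hf, Real.sqrt_eq_rpow]
  norm_num

variable [PseudoMetricSpace α] [OpensMeasurableSpace α]

lemma tendsto_lpNorm_restrict_compl_ball (hf : MemLp f p μ) (hp₀ : p ≠ 0) (hp : p ≠ ∞) (x₀ : α) :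
    Tendsto (fun n : ℕ => lpNorm f p (μ.restrict (ball x₀ n)ᶜ)) atTop (𝓝 0) := by
  have hp_pos : 0 < p.toReal := ENNReal.toReal_pos hp₀ hp
  have h_inter : ⋂ n : ℕ, (ball x₀ n)ᶜ = ∅ := by
    rw [← compl_iUnion, iUnion_ball_nat, compl_univ]
  have h_anti : Antitone fun n : ℕ => (ball x₀ (n : ℝ))ᶜ := fun m n hmn =>
    compl_subset_compl.2 (ball_subset_ball (Nat.cast_le.2 hmn))
  have h_lim := tendsto_setIntegral_of_antitone (fun n => measurableSet_ball.compl) h_anti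
    ⟨0, (hf.integrable_norm_rpow hp₀ hp).integrableOn⟩
  rw [h_inter, setIntegral_empty] at h_lim
  simp_rw [lpNorm_eq_integral_norm_rpow_toReal hp₀ hp hf.1.restrict]
  simpa [Real.zero_rpow (inv_ne_zero hp_pos.ne')] using
    h_lim.rpow_const (p := p.toReal⁻¹) (Or.inr (by positivity))

lemma aestronglyMeasurable_lpNorm_restrict_ball [SecondCountableTopology α] [SFinite μ]
    (hf : AEStronglyMeasurable f μ) (hp₀ : p ≠ 0) (hp : p ≠ ∞) (R : ℝ) :
    AEStronglyMeasurable (fun q => lpNorm f p (μ.restrict (ball q R))) μ := by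
  have h_ball : MeasurableSet {z : α × α | dist z.2 z.1 < R} :=
    (isOpen_lt (by fun_prop) continuous_const).measurableSet
  have h_joint : AEStronglyMeasurable
      ({z : α × α | dist z.2 z.1 < R}.indicator fun z => ‖f z.2‖ ^ p.toReal) (μ.prod μ) :=
    ((hf.norm.aemeasurable.pow_const _).aestronglyMeasurable.comp_snd).indicator h_ball
  have h_slice (q : α) : lpNorm f p (μ.restrict (ball q R)) =
      (∫ x, {z : α × α | dist z.2 z.1 < R}.indicator (fun z => ‖f z.2‖ ^ p.toReal) (q, x) ∂μ)
        ^ p.toReal⁻¹ := by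
    rw [lpNorm_eq_integral_norm_rpow_toReal hp₀ hp hf.restrict,
      ← integral_indicator measurableSet_ball]
    rfl
  simp_rw [h_slice]
  exact (h_joint.integral_prod_right'.aemeasurable.pow_const _).aestronglyMeasurable

end LpNorm

lemma measureReal_ball_pos {α : Type*} [PseudoMetricSpace α] [ProperSpace α] [MeasurableSpace α]
    (μ : Measure α) [μ.IsOpenPosMeasure] [IsFiniteMeasureOnCompacts μ] (x : α) {r : ℝ}
    (hr : 0 < r) : 0 < μ.real (ball x r) :=
  ENNReal.toReal_pos (measure_ball_pos μ x hr).ne' measure_ball_lt_top.ne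

section ExponentialDecay

variable {E : Type*} [NormedAddCommGroup E] [NormedSpace ℝ E] [FiniteDimensional ℝ E]
  [MeasurableSpace E] [BorelSpace E] {μ : Measure E} [μ.IsAddHaarMeasure]

lemma integrable_exp_neg_mul_norm {c : ℝ} (hc : 0 < c) :
    Integrable (fun x : E => exp (-c * ‖x‖)) μ := by
  have h_bracket := integrable_one_add_norm (E := E) (μ := μ) (lt_add_one _)
  have h_exp_isBigO : (fun x : E => exp (-c * ‖x‖)) =O[cocompact E]
      fun x => (1 + ‖x‖) ^ (-(Module.finrank ℝ E + 1 : ℝ)) := by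
    have h_shift (x : E) : exp (-c * ‖x‖) = exp c * exp (-c * (1 + ‖x‖)) := by
      rw [← exp_add]
      ring_nf
    simp_rw [h_shift]
    exact ((isLittleO_exp_neg_mul_rpow_atTop hc _).isBigO.comp_tendsto
      (tendsto_atTop_add_const_left _ 1 tendsto_norm_cocompact_atTop)).const_mul_left _
  have h_cont : Continuous fun x : E => exp (-c * ‖x‖) := by fun_prop
  exact h_cont.locallyIntegrable.integrable_of_isBigO_cocompact h_exp_isBigO
    (h_bracket.integrableAtFilter _)

lemma memLp_two_exp_neg_mul_norm {c : ℝ} (hc : 0 < c) :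
    MemLp (fun x : E => exp (-c * ‖x‖)) 2 μ := by
  have h_sq (x : E) : exp (-c * ‖x‖) ^ 2 = exp (-(2 * c) * ‖x‖) := by
    rw [← exp_nat_mul]
    push_cast
    ring_nf
  rw [memLp_two_iff_integrable_sq (by fun_prop)]
  simpa only [h_sq] using integrable_exp_neg_mul_norm (mul_pos two_pos hc)

end ExponentialDecay

section Barycenter

variable {E : Type*} [NormedAddCommGroup E] [MeasurableSpace E]

/-- `w` is a nonnegative density of finite positive total mass, all of it within distance `B`
of `p`. -/
structure IsLocalizedDensity (μ : Measure E) (w : E → ℝ) (p : E) (B : ℝ) : Prop where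
  integrable : Integrable w μ
  nonneg : ∀ q, 0 ≤ w q
  integral_pos : 0 < ∫ q, w q ∂μ
  support_subset : support w ⊆ closedBall p B

variable {μ : Measure E} {w w' : E → ℝ} {p : E} {B : ℝ}

lemma IsLocalizedDensity.mono (h : IsLocalizedDensity μ w p B) {p' : E} {B' : ℝ}
    (hball : closedBall p B ⊆ closedBall p' B') : IsLocalizedDensity μ w p' B' :=
  { h with support_subset := h.support_subset.trans hball }

variable [NormedSpace ℝ E]

/-- The center of mass `∫ w(q) q dμ(q) / ∫ w dμ` of a mass density `w`. It is the junk value `0`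
when the total mass vanishes. -/
def barycenter (μ : Measure E) (w : E → ℝ) : E :=
  (∫ q, w q ∂μ)⁻¹ • ∫ q, w q • q ∂μ

namespace IsLocalizedDensity

lemma norm_smul_sub_le (h : IsLocalizedDensity μ w p B) (q : E) :
    ‖w q • (q - p)‖ ≤ B * w q := by
  rw [norm_smul, Real.norm_of_nonneg (h.nonneg q), mul_comm B]
  rcases eq_or_ne (w q) 0 with hq | hq
  · simp [hq]
  · exact mul_le_mul_of_nonneg_left (mem_closedBall_iff_norm.1 (h.support_subset hq)) (h.nonneg q)

variable [BorelSpace E] [SecondCountableTopology E]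

lemma integrable_smul_sub (h : IsLocalizedDensity μ w p B) (a : E) :
    Integrable (fun q => w q • (q - a)) μ := by
  have h_center : Integrable (fun q => w q • (q - p)) μ :=
    (h.integrable.const_mul B).mono' (h.integrable.1.smul (by fun_prop))
      (Eventually.of_forall h.norm_smul_sub_le)
  refine (h_center.add (h.integrable.smul_const (p - a))).congr (Eventually.of_forall fun q => ?_)
  simp only [Pi.add_apply, ← smul_add, sub_add_sub_cancel]

variable [CompleteSpace E]

lemma barycenter_sub (h : IsLocalizedDensity μ w p B) (a : E) :
    barycenter μ w - a = (∫ q, w q ∂μ)⁻¹ • ∫ q, w q • (q - a) ∂μ := by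
  have h_moment : ∫ q, w q • (q - a) ∂μ = ∫ q, w q • q ∂μ - (∫ q, w q ∂μ) • a := by
    have h_smul : Integrable (fun q => w q • q) μ := by simpa using h.integrable_smul_sub 0
    simp_rw [smul_sub]
    rw [integral_sub h_smul (h.integrable.smul_const a), integral_smul_const]
  rw [h_moment, smul_sub, inv_smul_smul₀ h.integral_pos.ne', barycenter]

lemma norm_barycenter_sub_le (h : IsLocalizedDensity μ w p B) : ‖barycenter μ w - p‖ ≤ B := by
  have h_moment : ‖∫ q, w q • (q - p) ∂μ‖ ≤ B * ∫ q, w q ∂μ := by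
    rw [← integral_const_mul]
    exact norm_integral_le_of_norm_le (h.integrable.const_mul B)
      (Eventually.of_forall h.norm_smul_sub_le)
  rw [h.barycenter_sub, norm_smul, norm_inv, Real.norm_of_nonneg h.integral_pos.le]
  exact (inv_mul_le_iff₀' h.integral_pos).2 h_moment

lemma barycenter_comp_sub [μ.IsAddRightInvariant] (h : IsLocalizedDensity μ w p B) (y : E) :
    barycenter μ (fun q => w (q - y)) = barycenter μ w + y := by
  have h_moment : ∫ q, w (q - y) • q ∂μ = ∫ q, w q • (q - -y) ∂μ := by
    rw [← integral_sub_right_eq_self (fun q => w q • (q - -y)) y]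
    simp only [sub_neg_eq_add, sub_add_cancel]
  rw [← sub_neg_eq_add, h.barycenter_sub, barycenter, h_moment, integral_sub_right_eq_self w y]

/- The first moment of `w'` about its own barycenter vanishes, so it can be subtracted for free. -/
lemma barycenter_sub_barycenter (h : IsLocalizedDensity μ w p B)
    (h' : IsLocalizedDensity μ w' p B) :
    barycenter μ w - barycenter μ w' =
      (∫ q, w q ∂μ)⁻¹ • ∫ q, (w q - w' q) • (q - barycenter μ w') ∂μ := by
  have h_moment : ∫ q, w' q • (q - barycenter μ w') ∂μ = 0 := by
    have h_self := h'.barycenter_sub (barycenter μ w')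
    rwa [sub_self, eq_comm, smul_eq_zero_iff_right (inv_ne_zero h'.integral_pos.ne')] at h_self
  simp_rw [sub_smul]
  rw [integral_sub (h.integrable_smul_sub _) (h'.integrable_smul_sub _), h_moment, sub_zero,
    h.barycenter_sub]

lemma norm_barycenter_sub_barycenter_le {ε m : ℝ} (hμ : μ (closedBall p B) < ∞)
    (h : IsLocalizedDensity μ w p B) (h' : IsLocalizedDensity μ w' p B)
    (hε : ∀ q, |w q - w' q| ≤ ε) (hm : 0 < m) (hmw : m ≤ ∫ q, w q ∂μ) :
    ‖barycenter μ w - barycenter μ w'‖ ≤ 2 * B * μ.real (closedBall p B) / m * ε := by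
  have hε_nonneg : 0 ≤ ε := (abs_nonneg _).trans (hε p)
  have h_vanish (q : E) (hq : q ∉ closedBall p B) :
      (w q - w' q) • (q - barycenter μ w') = 0 := by
    rw [notMem_support.1 (notMem_subset h.support_subset hq),
      notMem_support.1 (notMem_subset h'.support_subset hq), sub_self, zero_smul]
  have h_bound (q : E) (hq : q ∈ closedBall p B) :
      ‖(w q - w' q) • (q - barycenter μ w')‖ ≤ ε * (2 * B) := by
    have h_dist : ‖q - barycenter μ w'‖ ≤ 2 * B := by
      have h_tri := norm_sub_le_norm_sub_add_norm_sub q p (barycenter μ w')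
      have h_bary := norm_sub_rev p (barycenter μ w') ▸ h'.norm_barycenter_sub_le
      linarith [mem_closedBall_iff_norm.1 hq]
    rw [norm_smul]
    exact mul_le_mul (hε q) h_dist (norm_nonneg _) hε_nonneg
  have h_moment : ‖∫ q, (w q - w' q) • (q - barycenter μ w') ∂μ‖ ≤
      ε * (2 * B) * μ.real (closedBall p B) := by
    rw [← setIntegral_eq_integral_of_forall_compl_eq_zero h_vanish]
    exact norm_setIntegral_le_of_norm_le_const hμ h_bound
  rw [h.barycenter_sub_barycenter h', norm_smul, norm_inv, Real.norm_of_nonneg h.integral_pos.le]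
  calc (∫ q, w q ∂μ)⁻¹ * ‖∫ q, (w q - w' q) • (q - barycenter μ w') ∂μ‖
      ≤ m⁻¹ * (ε * (2 * B) * μ.real (closedBall p B)) := by gcongr
    _ = 2 * B * μ.real (closedBall p B) / m * ε := by ring

end IsLocalizedDensity

end Barycenter

section Jet

variable {F : Type*} [NormedAddCommGroup F] [InnerProductSpace ℝ F] [CompleteSpace F]
  {u v : F → ℝ}

/-- The 1-jet `(∇u, u)` of `u`, with values in the `ℓ²` product, so that `H¹`-norms of `u` are
`L²`-norms of its jet. -/
def jet (u : F → ℝ) (x : F) : WithLp 2 (F × ℝ) :=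
  WithLp.toLp 2 (gradient u x, u x)

lemma norm_jet_sq (u : F → ℝ) (x : F) : ‖jet u x‖ ^ 2 = ‖gradient u x‖ ^ 2 + u x ^ 2 := by
  simp [WithLp.prod_norm_sq_eq_of_L2, jet]

lemma norm_jet_le (u : F → ℝ) (x : F) : ‖jet u x‖ ≤ |u x| + ‖gradient u x‖ := by
  refine le_of_sq_le_sq ?_ (by positivity)
  rw [norm_jet_sq, ← sq_abs (u x)]
  nlinarith [mul_nonneg (abs_nonneg (u x)) (norm_nonneg (gradient u x))]

lemma jet_add (hu : Differentiable ℝ u) (hv : Differentiable ℝ v) :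
    jet (fun x => u x + v x) = jet u + jet v := by
  funext x
  rw [jet, gradient, fderiv_fun_add (hu x) (hv x), map_add]
  rfl

lemma jet_sub (hu : Differentiable ℝ u) (hv : Differentiable ℝ v) :
    jet (fun x => u x - v x) = jet u - jet v := by
  funext x
  rw [jet, gradient, fderiv_fun_sub (hu x) (hv x), map_sub]
  rfl

lemma jet_comp_sub (u : F → ℝ) (y : F) : jet (fun x => u (x - y)) = fun x => jet u (x - y) := by
  funext x
  rw [jet, gradient, fderiv_comp_sub]
  rfl

lemma measurable_gradient [MeasurableSpace F] [BorelSpace F] [SecondCountableTopology F]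
    (u : F → ℝ) : Measurable (gradient u) :=
  (InnerProductSpace.toDual ℝ F).symm.continuous.measurable.comp (measurable_fderiv ℝ u)

end Jet

section H1

variable {N : ℕ} {u v : EuclideanSpace ℝ (Fin N) → ℝ}

lemma goodFun_iff_memLp_jet : GoodFun u ↔ Differentiable ℝ u ∧ MemLp (jet u) 2 := by
  refine and_congr_right fun hu => ?_
  rw [memLp_prodLp_iff,
    ← memLp_two_iff_integrable_sq_norm (measurable_gradient u).aestronglyMeasurable,
    ← memLp_two_iff_integrable_sq hu.continuous.aestronglyMeasurable]
  rfl

namespace GoodFun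

lemma memLp_jet (hu : GoodFun u) : MemLp (jet u) 2 :=
  (goodFun_iff_memLp_jet.1 hu).2

lemma add (hu : GoodFun u) (hv : GoodFun v) : GoodFun fun x => u x + v x := by
  refine goodFun_iff_memLp_jet.2 ⟨hu.1.add hv.1, ?_⟩
  rw [jet_add hu.1 hv.1]
  exact hu.memLp_jet.add hv.memLp_jet

lemma sub (hu : GoodFun u) (hv : GoodFun v) : GoodFun fun x => u x - v x := by
  refine goodFun_iff_memLp_jet.2 ⟨hu.1.sub hv.1, ?_⟩
  rw [jet_sub hu.1 hv.1]
  exact hu.memLp_jet.sub hv.memLp_jet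

lemma comp_sub (hu : GoodFun u) (y : EuclideanSpace ℝ (Fin N)) : GoodFun fun x => u (x - y) := by
  refine goodFun_iff_memLp_jet.2 ⟨hu.1.comp (differentiable_id.sub_const y), ?_⟩
  rw [jet_comp_sub]
  exact hu.memLp_jet.comp_measurePreserving (measurePreserving_sub_right volume y)

end GoodFun

/-- The norm of `u` in `H¹(s)`. -/
def h1NormOn (u : EuclideanSpace ℝ (Fin N) → ℝ) (s : Set (EuclideanSpace ℝ (Fin N))) : ℝ :=
  lpNorm (jet u) 2 (volume.restrict s)

lemma h1NormOn_univ (hu : GoodFun u) : h1NormOn u univ = H1Norm u := by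
  rw [h1NormOn, Measure.restrict_univ, lpNorm_two_eq_sqrt_integral hu.memLp_jet.1, H1Norm]
  simp_rw [norm_jet_sq]

lemma h1NormOn_mono (hu : GoodFun u) {s t : Set (EuclideanSpace ℝ (Fin N))} (hst : s ⊆ t) :
    h1NormOn u s ≤ h1NormOn u t :=
  lpNorm_restrict_mono hu.memLp_jet hst

lemma h1NormOn_le_h1Norm (hu : GoodFun u) (s : Set (EuclideanSpace ℝ (Fin N))) :
    h1NormOn u s ≤ H1Norm u :=
  (h1NormOn_mono hu (subset_univ s)).trans_eq (h1NormOn_univ hu)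

lemma h1Norm_le_h1NormOn_add_h1NormOn_compl (hu : GoodFun u)
    {s : Set (EuclideanSpace ℝ (Fin N))} (hs : MeasurableSet s) :
    H1Norm u ≤ h1NormOn u s + h1NormOn u sᶜ := by
  rw [← h1NormOn_univ hu, h1NormOn, Measure.restrict_univ]
  exact lpNorm_le_lpNorm_restrict_add_lpNorm_restrict_compl hu.memLp_jet one_le_two hs

lemma abs_h1NormOn_sub_h1NormOn_le (hu : GoodFun u) (hv : GoodFun v)
    (s : Set (EuclideanSpace ℝ (Fin N))) :
    |h1NormOn u s - h1NormOn v s| ≤ H1Norm fun x => u x - v x := by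
  have h_sub : lpNorm (jet u - jet v) 2 (volume.restrict s) ≤ H1Norm fun x => u x - v x := by
    rw [← jet_sub hu.1 hv.1]
    exact h1NormOn_le_h1Norm (hu.sub hv) s
  have h_le := lpNorm_le_lpNorm_add_lpNorm_sub' (f := jet u) (hv.memLp_jet.restrict s) one_le_two
  have h_ge := lpNorm_le_lpNorm_add_lpNorm_sub (f := jet v) (hu.memLp_jet.restrict s) one_le_two
  simp only [h1NormOn]
  exact abs_sub_le_iff.2 ⟨by linarith, by linarith⟩

lemma h1NormOn_comp_sub (hu : GoodFun u) (y : EuclideanSpace ℝ (Fin N))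
    {s : Set (EuclideanSpace ℝ (Fin N))} (hs : MeasurableSet s) :
    h1NormOn (fun x => u (x - y)) ((· - y) ⁻¹' s) = h1NormOn u s := by
  rw [h1NormOn, jet_comp_sub]
  exact lpNorm_comp_measurePreserving hu.memLp_jet.1.restrict
    ((measurePreserving_sub_right volume y).restrict_preimage hs)

lemma h1NormOn_comp_sub_ball (hu : GoodFun u) (y q : EuclideanSpace ℝ (Fin N)) (R : ℝ) :
    h1NormOn (fun x => u (x - y)) (ball q R) = h1NormOn u (ball (q - y) R) := by
  rw [← h1NormOn_comp_sub hu y measurableSet_ball]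
  congr 1
  ext x
  simp [dist_eq_norm]

lemma h1Norm_comp_sub (hu : GoodFun u) (y : EuclideanSpace ℝ (Fin N)) :
    H1Norm (fun x => u (x - y)) = H1Norm u := by
  rw [← h1NormOn_univ hu, ← h1NormOn_univ (hu.comp_sub y), ← h1NormOn_comp_sub hu y .univ,
    preimage_univ]

lemma exists_forall_h1NormOn_compl_ball_le {g : EuclideanSpace ℝ (Fin N) → ℝ} (hg : MemLp g 2)
    {ε : ℝ} (hε : 0 < ε) :
    ∃ R > 0, ∀ u, (∀ x, |u x| + ‖gradient u x‖ ≤ g x) → h1NormOn u (ball 0 R)ᶜ ≤ ε := by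
  have h_tail := tendsto_lpNorm_restrict_compl_ball hg two_ne_zero ENNReal.ofNat_ne_top 0
  obtain ⟨n, hn_tail, hn_pos⟩ :=
    ((h_tail.eventually_le_const hε).and (eventually_gt_atTop 0)).exists
  refine ⟨n, Nat.cast_pos.2 hn_pos, fun u hu => ?_⟩
  exact (lpNorm_mono_real (hg.restrict _) fun x => (norm_jet_le u x).trans (hu x)).trans hn_tail

end H1

section CenterOfMass

variable {N : ℕ} {u v : EuclideanSpace ℝ (Fin N) → ℝ} {p q : EuclideanSpace ℝ (Fin N)} {κ R : ℝ}

/-- The mass density at `q` is the excess over the threshold `2κ` of the `H¹`-norm of `u` on a ball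
around `q`. The radius `R + 1` makes this ball contain `ball p R` for every `q ∈ ball p 1`. -/
def massDensity (κ R : ℝ) (u : EuclideanSpace ℝ (Fin N) → ℝ) (q : EuclideanSpace ℝ (Fin N)) : ℝ :=
  max (h1NormOn u (ball q (R + 1)) - 2 * κ) 0

/-- The center of mass of `u`, the map `Υ` of the theorem. -/
def centerOfMass (κ R : ℝ) (u : EuclideanSpace ℝ (Fin N) → ℝ) : EuclideanSpace ℝ (Fin N) :=
  barycenter volume (massDensity κ R u)

/-- `u` is an `H¹`-function whose norm is at least `3κ` inside `ball p R` and at most `κ`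
outside. The threshold `2κ` of `massDensity` separates the two values. -/
structure IsConcentratedAt (κ R : ℝ) (u : EuclideanSpace ℝ (Fin N) → ℝ)
    (p : EuclideanSpace ℝ (Fin N)) : Prop where
  goodFun : GoodFun u
  le_h1NormOn_ball : 3 * κ ≤ h1NormOn u (ball p R)
  h1NormOn_compl_ball_le : h1NormOn u (ball p R)ᶜ ≤ κ

lemma massDensity_nonneg (κ R : ℝ) (u : EuclideanSpace ℝ (Fin N) → ℝ)
    (q : EuclideanSpace ℝ (Fin N)) : 0 ≤ massDensity κ R u q :=
  le_max_right _ _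

lemma massDensity_comp_sub (hu : GoodFun u) (κ R : ℝ) (y : EuclideanSpace ℝ (Fin N)) :
    massDensity κ R (fun x => u (x - y)) = fun q => massDensity κ R u (q - y) := by
  funext q
  rw [massDensity, massDensity, h1NormOn_comp_sub_ball hu]

lemma abs_massDensity_sub_massDensity_le (hu : GoodFun u) (hv : GoodFun v) (κ R : ℝ)
    (q : EuclideanSpace ℝ (Fin N)) :
    |massDensity κ R u q - massDensity κ R v q| ≤ H1Norm fun x => u x - v x := by
  refine (abs_max_sub_max_le_abs _ _ _).trans ?_
  rw [sub_sub_sub_cancel_right]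
  exact abs_h1NormOn_sub_h1NormOn_le hu hv _

lemma aestronglyMeasurable_massDensity (hu : GoodFun u) (κ R : ℝ) :
    AEStronglyMeasurable (massDensity κ R u) :=
  ((aestronglyMeasurable_lpNorm_restrict_ball hu.memLp_jet.1 two_ne_zero ENNReal.ofNat_ne_top
    (R + 1)).sub aestronglyMeasurable_const).sup aestronglyMeasurable_const

lemma massDensity_le_h1Norm (hu : GoodFun u) (hκ : 0 ≤ κ) (R : ℝ)
    (q : EuclideanSpace ℝ (Fin N)) : massDensity κ R u q ≤ H1Norm u :=
  max_le (by linarith [h1NormOn_le_h1Norm hu (ball q (R + 1))]) (Real.sqrt_nonneg _)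

namespace IsConcentratedAt

lemma dist_lt_of_lt_h1NormOn_ball (h : IsConcentratedAt κ R u p) {S : ℝ}
    (hq : κ < h1NormOn u (ball q S)) : dist q p < S + R := by
  by_contra! h_far
  have h_disj : ball q S ⊆ (ball p R)ᶜ := (ball_disjoint_ball h_far).subset_compl_right
  exact hq.not_ge ((h1NormOn_mono h.goodFun h_disj).trans h.h1NormOn_compl_ball_le)

lemma support_massDensity_subset (hκ : 0 ≤ κ) (h : IsConcentratedAt κ R u p) :
    support (massDensity κ R u) ⊆ closedBall p (2 * R + 1) := by
  intro q hq
  have h_excess : 0 < h1NormOn u (ball q (R + 1)) - 2 * κ := by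
    by_contra! h_le
    exact hq (max_eq_right h_le)
  have h_dist := h.dist_lt_of_lt_h1NormOn_ball (q := q) (S := R + 1) (by linarith)
  exact mem_closedBall.2 (by linarith)

lemma le_massDensity (h : IsConcentratedAt κ R u p) (hq : q ∈ ball p 1) :
    κ ≤ massDensity κ R u q := by
  have h_ball : ball p R ⊆ ball q (R + 1) :=
    ball_subset_ball' (by linarith [mem_ball'.1 hq])
  exact le_max_of_le_left
    (by linarith [h.le_h1NormOn_ball, h1NormOn_mono h.goodFun h_ball])

lemma integrable_massDensity (hκ : 0 ≤ κ) (h : IsConcentratedAt κ R u p) :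
    Integrable (massDensity κ R u) := by
  rw [← integrableOn_iff_integrable_of_support_subset (h.support_massDensity_subset hκ)]
  refine IntegrableOn.of_bound measure_closedBall_lt_top
    (aestronglyMeasurable_massDensity h.goodFun κ R).restrict (H1Norm u)
    (Eventually.of_forall fun q => ?_)
  rw [Real.norm_of_nonneg (massDensity_nonneg κ R u q)]
  exact massDensity_le_h1Norm h.goodFun hκ R q

lemma le_integral_massDensity (hκ : 0 ≤ κ) (h : IsConcentratedAt κ R u p) :
    κ * volume.real (ball (0 : EuclideanSpace ℝ (Fin N)) 1) ≤ ∫ q, massDensity κ R u q := by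
  have h_int := h.integrable_massDensity hκ
  calc κ * volume.real (ball (0 : EuclideanSpace ℝ (Fin N)) 1)
      = κ * volume.real (ball p 1) := by
        rw [measureReal_def, measureReal_def, Measure.addHaar_ball_center volume p]
    _ ≤ ∫ q in ball p 1, massDensity κ R u q :=
        setIntegral_ge_of_const_le_real measurableSet_ball measure_ball_lt_top.ne
          (fun q => h.le_massDensity) h_int.integrableOn
    _ ≤ ∫ q, massDensity κ R u q :=
        setIntegral_le_integral h_int (Eventually.of_forall (massDensity_nonneg κ R u))

lemma isLocalizedDensity (hκ : 0 < κ) (h : IsConcentratedAt κ R u p) :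
    IsLocalizedDensity volume (massDensity κ R u) p (2 * R + 1) where
  integrable := h.integrable_massDensity hκ.le
  nonneg := massDensity_nonneg κ R u
  integral_pos := (mul_pos hκ (measureReal_ball_pos volume 0 one_pos)).trans_le
    (h.le_integral_massDensity hκ.le)
  support_subset := h.support_massDensity_subset hκ.le

lemma norm_centerOfMass_sub_le (hκ : 0 < κ) (h : IsConcentratedAt κ R u p) :
    ‖centerOfMass κ R u - p‖ ≤ 2 * R + 1 :=
  (h.isLocalizedDensity hκ).norm_barycenter_sub_le

lemma centerOfMass_comp_sub (hκ : 0 < κ) (h : IsConcentratedAt κ R u p)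
    (y : EuclideanSpace ℝ (Fin N)) :
    centerOfMass κ R (fun x => u (x - y)) = centerOfMass κ R u + y := by
  rw [centerOfMass, massDensity_comp_sub h.goodFun]
  exact (h.isLocalizedDensity hκ).barycenter_comp_sub y

lemma dist_lt_of_h1Norm_sub_lt {p' : EuclideanSpace ℝ (Fin N)} (h : IsConcentratedAt κ R u p)
    (h' : IsConcentratedAt κ R v p') (huv : H1Norm (fun x => u x - v x) < 2 * κ) :
    dist p p' < 2 * R := by
  have h_close := abs_sub_le_iff.1
    (abs_h1NormOn_sub_h1NormOn_le h.goodFun h'.goodFun (ball p R))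
  have h_dist := h'.dist_lt_of_lt_h1NormOn_ball (q := p) (S := R)
    (by linarith [h.le_h1NormOn_ball, h_close.1])
  linarith

end IsConcentratedAt

lemma exists_norm_centerOfMass_sub_centerOfMass_le (N : ℕ) (hκ : 0 < κ) (hR : 0 < R) :
    ∃ L > 0, ∀ (u v : EuclideanSpace ℝ (Fin N) → ℝ) (p p' : EuclideanSpace ℝ (Fin N)),
      IsConcentratedAt κ R u p → IsConcentratedAt κ R v p' →
      H1Norm (fun x => u x - v x) < 2 * κ →
      ‖centerOfMass κ R u - centerOfMass κ R v‖ ≤ L * H1Norm fun x => u x - v x := by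
  set B := 4 * R + 1 with hB
  have hB_pos : 0 < B := by positivity
  have h_mass : 0 < κ * volume.real (ball (0 : EuclideanSpace ℝ (Fin N)) 1) :=
    mul_pos hκ (measureReal_ball_pos volume 0 one_pos)
  have h_vol : 0 < volume.real (closedBall (0 : EuclideanSpace ℝ (Fin N)) B) :=
    ENNReal.toReal_pos (measure_closedBall_pos volume 0 hB_pos).ne' measure_closedBall_lt_top.ne
  refine ⟨2 * B * volume.real (closedBall (0 : EuclideanSpace ℝ (Fin N)) B) /
    (κ * volume.real (ball (0 : EuclideanSpace ℝ (Fin N)) 1)), by positivity,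
    fun u v p p' hu hv huv => ?_⟩
  have h_dist := hu.dist_lt_of_h1Norm_sub_lt hv huv
  have hu_density := (hu.isLocalizedDensity hκ).mono (p' := p') (B' := B)
    (closedBall_subset_closedBall' (by linarith [hB]))
  have hv_density := (hv.isLocalizedDensity hκ).mono (p' := p') (B' := B)
    (closedBall_subset_closedBall (by linarith [hB]))
  have h_center : volume.real (closedBall p' B) =
      volume.real (closedBall (0 : EuclideanSpace ℝ (Fin N)) B) := by
    rw [measureReal_def, measureReal_def, Measure.addHaar_closedBall_center volume p']
  rw [← h_center]
  exact hu_density.norm_barycenter_sub_barycenter_le measure_closedBall_lt_top hv_density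
    (abs_massDensity_sub_massDensity_le hu.goodFun hv.goodFun κ R) h_mass
    (hu.le_integral_massDensity hκ.le)

lemma isConcentratedAt_translate_add {U φ : EuclideanSpace ℝ (Fin N) → ℝ} (hU : GoodFun U)
    (hφ : GoodFun φ) (hU_low : 4 * κ ≤ H1Norm U) (hU_tail : h1NormOn U (ball 0 R)ᶜ ≤ κ / 2)
    (hφ_small : H1Norm φ ≤ κ / 2) (p : EuclideanSpace ℝ (Fin N)) :
    IsConcentratedAt κ R (fun x => U (x - p) + φ x) p := by
  have hUp := hU.comp_sub p
  have h_tail : h1NormOn (fun x => U (x - p)) (ball p R)ᶜ ≤ κ / 2 := by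
    have h_ball : (· - p) ⁻¹' (ball 0 R)ᶜ = (ball p R)ᶜ := by
      ext x
      simp [dist_eq_norm]
    rwa [← h_ball, h1NormOn_comp_sub hU p measurableSet_ball.compl]
  have h_split := h1Norm_le_h1NormOn_add_h1NormOn_compl hUp (measurableSet_ball (x := p) (ε := R))
  rw [h1Norm_comp_sub hU] at h_split
  have h_perturb (s : Set (EuclideanSpace ℝ (Fin N))) :
      |h1NormOn (fun x => U (x - p) + φ x) s - h1NormOn (fun x => U (x - p)) s| ≤ κ / 2 := by
    refine (abs_h1NormOn_sub_h1NormOn_le (hUp.add hφ) hUp s).trans ?_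
    simpa only [add_sub_cancel_left] using hφ_small
  have h_in := abs_sub_le_iff.1 (h_perturb (ball p R))
  have h_out := abs_sub_le_iff.1 (h_perturb (ball p R)ᶜ)
  exact ⟨hUp.add hφ, by linarith, by linarith⟩

lemma comp_sub_mem_SS {Shat : Set (EuclideanSpace ℝ (Fin N) → ℝ)} {r : ℝ} (hu : u ∈ SS Shat r)
    (y : EuclideanSpace ℝ (Fin N)) : (fun x => u (x - y)) ∈ SS Shat r := by
  obtain ⟨p, U, φ, hU, hφ, hφ_lt, rfl⟩ := hu
  refine ⟨p + y, U, fun x => φ (x - y), hU, hφ.comp_sub y, ?_, ?_⟩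
  · rwa [h1Norm_comp_sub hφ]
  · simp only [sub_sub, add_comm y p]

theorem center_of_mass_general (N : ℕ) (Shat : Set (EuclideanSpace ℝ (Fin N) → ℝ))
    (hShat : ∀ U ∈ Shat, GoodFun U)
    (htight : ∀ ε > 0, ∃ R > 0, ∀ U ∈ Shat, h1NormOn U (ball 0 R)ᶜ ≤ ε)
    (rstar : ℝ) (hrstar : 0 < rstar) (hlow : ∀ U ∈ Shat, rstar ≤ H1Norm U) :
    ∃ r₀ > 0, ∃ R₀ > 0, ∃ Υ : (EuclideanSpace ℝ (Fin N) → ℝ) → EuclideanSpace ℝ (Fin N),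
      (∀ (u U φ : EuclideanSpace ℝ (Fin N) → ℝ) (p : EuclideanSpace ℝ (Fin N)),
        U ∈ Shat → GoodFun φ → H1Norm φ ≤ r₀ → u = (fun x => U (x - p) + φ x) →
        ‖Υ u - p‖ ≤ 2 * R₀) ∧
      (∀ u ∈ SS Shat r₀, ∀ y : EuclideanSpace ℝ (Fin N),
        (fun x => u (x - y)) ∈ SS Shat r₀ ∧
        Υ (fun x => u (x - y)) = Υ u + y) ∧
      (∃ C₁ > 0, ∃ C₂ > 0, ∀ u ∈ SS Shat r₀, ∀ v ∈ SS Shat r₀,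
        H1Norm (fun x => u x - v x) ≤ C₂ →
        ‖Υ u - Υ v‖ ≤ C₁ * H1Norm (fun x => u x - v x)) := by
  obtain ⟨κ, hκ, rfl⟩ : ∃ κ > 0, rstar = 4 * κ := ⟨rstar / 4, by positivity, by ring⟩
  obtain ⟨R, hR, htail⟩ := htight (κ / 2) (half_pos hκ)
  have h_conc (U φ) (hU : U ∈ Shat) (hφ : GoodFun φ) (hφ_small : H1Norm φ ≤ κ / 2) (p) :
      IsConcentratedAt κ R (fun x => U (x - p) + φ x) p :=
    isConcentratedAt_translate_add (hShat U hU) hφ (hlow U hU) (htail U hU) hφ_small p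
  have h_conc_SS (u) (hu : u ∈ SS Shat (κ / 2)) : ∃ p, IsConcentratedAt κ R u p := by
    obtain ⟨p, U, φ, hU, hφ, hφ_lt, rfl⟩ := hu
    exact ⟨p, h_conc U φ hU hφ hφ_lt.le p⟩
  obtain ⟨L, hL, h_lip⟩ := exists_norm_centerOfMass_sub_centerOfMass_le N hκ hR
  refine ⟨κ / 2, half_pos hκ, R + 1 / 2, by positivity, centerOfMass κ R, ?_, ?_,
    L, hL, κ, hκ, ?_⟩
  · rintro _ U φ p hU hφ hφ_small rfl
    linarith [(h_conc U φ hU hφ hφ_small p).norm_centerOfMass_sub_le hκ]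
  · intro u hu y
    obtain ⟨p, hp⟩ := h_conc_SS u hu
    exact ⟨comp_sub_mem_SS hu y, hp.centerOfMass_comp_sub hκ y⟩
  · intro u hu v hv huv
    obtain ⟨p, hp⟩ := h_conc_SS u hu
    obtain ⟨p', hp'⟩ := h_conc_SS v hv
    exact h_lip u v p p' hp hp' (by linarith)

end CenterOfMass

/-- Lemma 2.2: existence of a shift-equivariant, locally Lipschitz center of mass
`Υ : S(r₀) → ℝ^N` with `|Υ(u) - p| ≤ 2R₀` for every representation `u = U(·-p) + φ`. -/
theorem center_of_mass (N : ℕ) (hN : 3 ≤ N)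
    (Shat : Set (EuclideanSpace ℝ (Fin N) → ℝ))
    (hShat : ∀ U ∈ Shat, GoodFun U)
    (C c : ℝ) (hC : 0 < C) (hc : 0 < c)
    (hdecay : ∀ U ∈ Shat, ∀ x : EuclideanSpace ℝ (Fin N),
      |U x| + ‖gradient U x‖ ≤ C * Real.exp (-c * ‖x‖))
    (rstar : ℝ) (hrstar : 0 < rstar)
    (hlow : ∀ U ∈ Shat, rstar ≤ H1Norm U) :
    ∃ r₀ > 0, ∃ R₀ > 0, ∃ Υ : (EuclideanSpace ℝ (Fin N) → ℝ) → EuclideanSpace ℝ (Fin N),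
      -- (a) closeness to the translation point of any admissible representation
      (∀ (u U φ : EuclideanSpace ℝ (Fin N) → ℝ) (p : EuclideanSpace ℝ (Fin N)),
        U ∈ Shat → GoodFun φ → H1Norm φ ≤ r₀ → u = (fun x => U (x - p) + φ x) →
        ‖Υ u - p‖ ≤ 2 * R₀) ∧
      -- (b) shift equivariance
      (∀ u ∈ SS Shat r₀, ∀ y : EuclideanSpace ℝ (Fin N),
        (fun x => u (x - y)) ∈ SS Shat r₀ ∧
        Υ (fun x => u (x - y)) = Υ u + y) ∧
      -- (c) local Lipschitz continuity
      (∃ C₁ > 0, ∃ C₂ > 0, ∀ u ∈ SS Shat r₀, ∀ v ∈ SS Shat r₀,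
        H1Norm (fun x => u x - v x) ≤ C₂ →
        ‖Υ u - Υ v‖ ≤ C₁ * H1Norm (fun x => u x - v x)) := by
  refine center_of_mass_general N Shat hShat (fun ε hε => ?_) rstar hrstar hlow
  obtain ⟨R, hR, htail⟩ := exists_forall_h1NormOn_compl_ball_le
    ((memLp_two_exp_neg_mul_norm hc).const_mul C) hε
  exact ⟨R, hR, fun U hU => htail U (hdecay U hU)⟩
end
end

section
/- Let N ≥ 3 be an integer and p > 1. Let V : ℝ^N → ℝ be measurable and let 0 < V̲ ≤ m0 be constants with V(x) ≥ V̲ for all x ∈ ℝ^N. Let D ⊆ ℝ^N be a measurable set with V(x) ≥ m0 for all x ∈ D. For ε > 0 and admissible u (with in addition x ↦ V(εx)u(x)² integrable) define J_ε(u) = (1/2)∫_{ℝ^N}|∇u|² dx + (1/2)∫_{ℝ^N}V(εx)u² dx − ∫_{ℝ^N}F(u) dx + Q_ε(u), where Q_ε(u) = ( max(0, ε^{−2}∫_{{x : εx ∉ D}} u² dx − 1) )^{(p+1)/2}. Then for every ε with 0 < ε ≤ 1 and ε²(m0 − V̲) ≤ 1, and every such u, one has J_ε(u) ≥ L_{m0}(u)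 − (m0 − V̲)ε². (Lemma 3.4 of the paper, with C₀ = m0 − V̲ and D the enlarged domain Ω_{2h₀} on which V ≥ m0.) -/
open MeasureTheory Real

noncomputable section

/-- The penalization term `Q_ε`. -/
def Qfun {N : ℕ} (ε p : ℝ) (D : Set (EuclideanSpace ℝ (Fin N)))
    (u : EuclideanSpace ℝ (Fin N) → ℝ) : ℝ :=
  (max 0 (ε⁻¹ ^ 2 * (∫ x in {x | ε • x ∉ D}, (u x) ^ 2) - 1)) ^ ((p + 1) / 2)

/-- The penalized functional `J_ε`. -/
def Jfun {N : ℕ} (ε p : ℝ) (V : EuclideanSpace ℝ (Fin N) → ℝ)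
    (D : Set (EuclideanSpace ℝ (Fin N))) (F : ℝ → ℝ)
    (u : EuclideanSpace ℝ (Fin N) → ℝ) : ℝ :=
  (1 / 2) * (∫ x, ‖gradient u x‖ ^ 2) + (1 / 2) * (∫ x, V (ε • x) * (u x) ^ 2) -
    (∫ x, F (u x)) + Qfun ε p D u

/-!
Since `V(εx) ≥ m0` where `εx ∈ D` and `V(εx) ≥ V̲` elsewhere, replacing `V(εx)` by `m0` costs at
most `(m0 - V̲) / 2 * A`, where `A = ∫_{εx ∉ D} u²`. With `t = ε⁻² A - 1` this loss equals
`(m0 - V̲) ε² + c (t - 1)` for `c = ε² (m0 - V̲) / 2 ≤ 1`, and the penalization `Q_ε(u) = t₊ ^ q`,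
`q = (p + 1) / 2 ≥ 1`, absorbs `c (t - 1)`.
-/

section WeightedIntegral

variable {α : Type*} [MeasurableSpace α] {μ : Measure α} {S : Set α} {W g : α → ℝ} {a b : ℝ}

lemma const_mul_setIntegral_le_setIntegral_mul (hS : MeasurableSet S) (hg : IntegrableOn g S μ)
    (hWg : IntegrableOn (fun x ↦ W x * g x) S μ) (hg_nonneg : ∀ x ∈ S, 0 ≤ g x)
    (hW : ∀ x ∈ S, a ≤ W x) :
    a * ∫ x in S, g x ∂μ ≤ ∫ x in S, W x * g x ∂μ := by
  rw [← integral_const_mul]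
  exact setIntegral_mono_on (hg.const_mul a) hWg hS fun x hx ↦
    mul_le_mul_of_nonneg_right (hW x hx) (hg_nonneg x hx)

lemma const_mul_integral_sub_le_integral_mul (hS : MeasurableSet S) (hg : Integrable g μ)
    (hWg : Integrable (fun x ↦ W x * g x) μ) (hg_nonneg : ∀ x, 0 ≤ g x)
    (hWS : ∀ x ∈ S, a ≤ W x) (hWSc : ∀ x ∈ Sᶜ, b ≤ W x) :
    b * ∫ x, g x ∂μ - (b - a) * ∫ x in S, g x ∂μ ≤ ∫ x, W x * g x ∂μ :=
  calc
    _ = a * ∫ x in S, g x ∂μ + b * ∫ x in Sᶜ, g x ∂μ := by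
      rw [← integral_add_compl hS hg]
      ring
    _ ≤ (∫ x in S, W x * g x ∂μ) + ∫ x in Sᶜ, W x * g x ∂μ :=
      add_le_add
        (const_mul_setIntegral_le_setIntegral_mul hS hg.integrableOn hWg.integrableOn
          (fun x _ ↦ hg_nonneg x) hWS)
        (const_mul_setIntegral_le_setIntegral_mul hS.compl hg.integrableOn hWg.integrableOn
          (fun x _ ↦ hg_nonneg x) hWSc)
    _ = ∫ x, W x * g x ∂μ := integral_add_compl hS hWg

end WeightedIntegral

lemma mul_sub_one_le_max_zero_rpow {c t q : ℝ} (hc : 0 ≤ c) (hc_one : c ≤ 1) (hq : 1 ≤ q) :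
    c * (t - 1) ≤ max 0 t ^ q := by
  rcases le_total t 1 with ht | ht
  · calc
      c * (t - 1) ≤ 0 := mul_nonpos_of_nonneg_of_nonpos hc (sub_nonpos.2 ht)
      _ ≤ max 0 t ^ q := rpow_nonneg (le_max_left 0 t) q
  · calc
      c * (t - 1) ≤ t - 1 := mul_le_of_le_one_left (sub_nonneg.2 ht) hc_one
      _ ≤ t := sub_le_self t zero_le_one
      _ ≤ t ^ q := self_le_rpow_of_one_le ht hq
      _ = max 0 t ^ q := by rw [max_eq_right (zero_le_one.trans ht)]

section Functionals

variable {N : ℕ} {ε p : ℝ} {D : Set (EuclideanSpace ℝ (Fin N))} {u : EuclideanSpace ℝ (Fin N) → ℝ}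

lemma mul_setIntegral_sq_sub_le_Qfun {c : ℝ} (hc : 0 ≤ c) (hε : ε ≠ 0) (hεc : ε ^ 2 * c ≤ 2)
    (hp : 1 ≤ p) :
    c / 2 * (∫ x in {x | ε • x ∉ D}, u x ^ 2) - c * ε ^ 2 ≤ Qfun ε p D u := by
  set A := ∫ x in {x | ε • x ∉ D}, u x ^ 2
  calc
    c / 2 * A - c * ε ^ 2 = ε ^ 2 * c / 2 * (ε⁻¹ ^ 2 * A - 1 - 1) := by field_simp; ring
    _ ≤ max 0 (ε⁻¹ ^ 2 * A - 1) ^ ((p + 1) / 2) :=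
      mul_sub_one_le_max_zero_rpow (by positivity) (by linarith) (by linarith)

theorem Jfun_ge_Lfun_sub_general (hp : 1 ≤ p) {V : EuclideanSpace ℝ (Fin N) → ℝ} {Vlow m0 : ℝ}
    (hVm0 : Vlow ≤ m0) (hV : ∀ x, Vlow ≤ V x) (hD : MeasurableSet D) (hVD : ∀ x ∈ D, m0 ≤ V x)
    {F : ℝ → ℝ} (hε : ε ≠ 0) (hεm : ε ^ 2 * (m0 - Vlow) ≤ 2) (hu : Admissible F u)
    (hVu : Integrable (fun x ↦ V (ε • x) * u x ^ 2)) :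
    Lfun m0 F u - (m0 - Vlow) * ε ^ 2 ≤ Jfun ε p V D F u := by
  obtain ⟨-, -, hu_sq, -⟩ := hu
  have hS : MeasurableSet {x | ε • x ∉ D} := (measurable_const_smul ε hD).compl
  have potential_ge : m0 * (∫ x, u x ^ 2) - (m0 - Vlow) * (∫ x in {x | ε • x ∉ D}, u x ^ 2) ≤
      ∫ x, V (ε • x) * u x ^ 2 :=
    const_mul_integral_sub_le_integral_mul hS hu_sq hVu (fun x ↦ sq_nonneg (u x))
      (fun x _ ↦ hV (ε • x)) (fun x hx ↦ hVD (ε • x) (not_not.1 hx))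
  have penalization_ge := mul_setIntegral_sq_sub_le_Qfun (D := D) (u := u)
    (sub_nonneg.2 hVm0) hε hεm hp
  unfold Lfun Jfun
  linarith

end Functionals

/-- Lemma 3.4: `J_ε(u) ≥ L_{m0}(u) - (m0 - V̲)ε²`. -/
theorem Jfun_ge_Lfun_sub (N : ℕ) (hN : 3 ≤ N) (p : ℝ) (hp : 1 < p)
    (V : EuclideanSpace ℝ (Fin N) → ℝ) (hVmeas : Measurable V)
    (Vlow m0 : ℝ) (hVlow : 0 < Vlow) (hVm0 : Vlow ≤ m0)
    (hV : ∀ x, Vlow ≤ V x)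
    (D : Set (EuclideanSpace ℝ (Fin N))) (hD : MeasurableSet D)
    (hVD : ∀ x ∈ D, m0 ≤ V x)
    (F : ℝ → ℝ)
    (ε : ℝ) (hε : 0 < ε) (hε1 : ε ≤ 1) (hεm : ε ^ 2 * (m0 - Vlow) ≤ 1)
    (u : EuclideanSpace ℝ (Fin N) → ℝ) (hu : Admissible F u)
    (hVu : Integrable (fun x => V (ε • x) * (u x) ^ 2)) :
    Lfun m0 F u - (m0 - Vlow) * ε ^ 2 ≤ Jfun ε p V D F u :=
  Jfun_ge_Lfun_sub_general hp.le hVm0 hV hD hVD hε.ne' (hεm.trans one_le_two) hu hVu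
end
end
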